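/- Let d ≥ 1 and let Λ = [−1/2, 1/2]^d ⊆ ℝ^d. Let F be a finite set of pairs (x, R) ∈ ℝ^d × ℝ with 0 < R ≤ 1 for every (x, R) ∈ F. Suppose that for every (x, R) ∈ F with dist(x, Λ) ≤ 4 there exists (x', R') ∈ F such that R' ≤ R/2 and B(x', R') ∩ B(x, R) ≠ ∅. Then no ball B(x, R) with (x, R) ∈ F intersects Λ. -/

import Mathlib

open Metric

/-!
Suppose a ball of the family meets `Λ`. Choosing overlapping balls of smaller and smaller radius
gives a chain of balls whose radii decay geometrically. By the triangle inequality the centers move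
by at most a convergent geometric series, so the chain never leaves the region where the hypothesis
applies. Its radii therefore become arbitrarily small, which is impossible if the radii in the
family are bounded away from zero.
-/

section Radii

variable {α : Type*}

theorem exists_mem_le_pow_mul {S : Set α} {f : α → ℝ} {θ : ℝ} (hθ : 0 ≤ θ)
    (hstep : ∀ a ∈ S, ∃ b ∈ S, f b ≤ θ * f a) {a : α} (ha : a ∈ S) (n : ℕ) :
    ∃ b ∈ S, f b ≤ θ ^ n * f a := by
  induction n with
  | zero => exact ⟨a, ha, by rw [pow_zero, one_mul]⟩
  | succ n ih =>
    obtain ⟨b, hb, hba⟩ := ih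
    obtain ⟨c, hc, hcb⟩ := hstep b hb
    refine ⟨c, hc, ?_⟩
    calc
      f c ≤ θ * f b := hcb
      _ ≤ θ * (θ ^ n * f a) := by gcongr
      _ = θ ^ (n + 1) * f a := by ring

theorem exists_mem_lt_of_forall_exists_le_mul {S : Set α} (hS : S.Nonempty) {f : α → ℝ} {θ : ℝ}
    (hθ₀ : 0 ≤ θ) (hθ₁ : θ < 1) (hstep : ∀ a ∈ S, ∃ b ∈ S, f b ≤ θ * f a)
    {ε : ℝ} (hε : 0 < ε) : ∃ b ∈ S, f b < ε := by
  obtain ⟨a, ha⟩ := hS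
  rcases le_or_gt (f a) 0 with hfa | hfa
  · exact ⟨a, ha, hfa.trans_lt hε⟩
  · obtain ⟨n, hn⟩ := exists_pow_lt_of_lt_one (div_pos hε hfa) hθ₁
    obtain ⟨b, hb, hba⟩ := exists_mem_le_pow_mul hθ₀ hstep ha n
    exact ⟨b, hb, hba.trans_lt ((lt_div_iff₀ hfa).mp hn)⟩

theorem exists_pos_forall_le (s : Finset α) {f : α → ℝ} (hf : ∀ a ∈ s, 0 < f a) :
    ∃ δ > 0, ∀ a ∈ s, δ ≤ f a := by
  rcases s.eq_empty_or_nonempty with rfl | hs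
  · exact ⟨1, one_pos, by simp⟩
  · obtain ⟨a, ha, hmin⟩ := s.exists_min_image f hs
    exact ⟨f a, hf a ha, hmin⟩

end Radii

section ChainReach

variable {E : Type*} [PseudoMetricSpace E] {θ : ℝ} {Λ : Set E} {p q : E × ℝ}

/-- A bound for the distance from `Λ` of all centers in a chain of overlapping balls starting at the
ball with center `p.1` and radius `p.2`, when each radius is at most `θ` times the preceding one.
The centers travel at most `r + 2 * θ * r + 2 * θ ^ 2 * r + ⋯ = (1 + θ) / (1 - θ) * r` in total,
where `r = p.2`. -/
noncomputable def chainReach (θ : ℝ) (Λ : Set E) (p : E × ℝ) : ℝ :=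
  infDist p.1 Λ + (1 + θ) / (1 - θ) * p.2

theorem infDist_le_chainReach (hθ₀ : 0 ≤ θ) (hθ₁ : θ < 1) (hp : 0 ≤ p.2) :
    infDist p.1 Λ ≤ chainReach θ Λ p := by
  have : 0 < 1 - θ := sub_pos.mpr hθ₁
  exact le_add_of_nonneg_right (by positivity)

theorem chainReach_le_of_nonempty_closedBall_inter (hθ : θ < 1)
    (hp : (closedBall p.1 p.2 ∩ Λ).Nonempty) : chainReach θ Λ p ≤ 2 * p.2 / (1 - θ) := by
  obtain ⟨y, hyp, hyΛ⟩ := hp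
  have hne : 1 - θ ≠ 0 := (sub_pos.mpr hθ).ne'
  calc
    chainReach θ Λ p ≤ p.2 + (1 + θ) / (1 - θ) * p.2 :=
      add_le_add_left ((infDist_le_dist_of_mem hyΛ).trans (mem_closedBall'.mp hyp)) _
    _ = 2 * p.2 / (1 - θ) := by field_simp; ring

theorem chainReach_le_chainReach (hθ₀ : 0 ≤ θ) (hθ₁ : θ < 1) (hqp : q.2 ≤ θ * p.2)
    (hinter : (closedBall q.1 q.2 ∩ closedBall p.1 p.2).Nonempty) :
    chainReach θ Λ q ≤ chainReach θ Λ p := by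
  have : 0 < 1 - θ := sub_pos.mpr hθ₁
  have hdist : infDist q.1 Λ ≤ infDist p.1 Λ + (q.2 + p.2) :=
    infDist_le_infDist_add_dist.trans
      (by gcongr; exact dist_le_add_of_nonempty_closedBall_inter_closedBall hinter)
  calc
    chainReach θ Λ q ≤ infDist p.1 Λ + (q.2 + p.2) + (1 + θ) / (1 - θ) * q.2 :=
      add_le_add_left hdist _
    _ ≤ infDist p.1 Λ + (θ * p.2 + p.2) + (1 + θ) / (1 - θ) * (θ * p.2) := by gcongr
    _ = chainReach θ Λ p := by
      rw [chainReach]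
      field_simp
      ring

end ChainReach

theorem stmt5_general {E : Type*} [PseudoMetricSpace E] {θ δ ρ : ℝ} (hθ₀ : 0 ≤ θ) (hθ₁ : θ < 1)
    (hδ : 0 < δ) (Λ : Set E) (F : Set (E × ℝ)) (hF : ∀ p ∈ F, δ ≤ p.2 ∧ p.2 ≤ ρ)
    (hdesc : ∀ p ∈ F, infDist p.1 Λ ≤ 2 * ρ / (1 - θ) →
      ∃ p' ∈ F, p'.2 ≤ θ * p.2 ∧
        (closedBall p'.1 p'.2 ∩ closedBall p.1 p.2).Nonempty) :
    ∀ p ∈ F, closedBall p.1 p.2 ∩ Λ = ∅ := by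
  intro p hp
  by_contra! hmeet
  let S : Set (E × ℝ) := {q ∈ F | chainReach θ Λ q ≤ 2 * ρ / (1 - θ)}
  have : 0 < 1 - θ := sub_pos.mpr hθ₁
  have hpS : p ∈ S :=
    ⟨hp, (chainReach_le_of_nonempty_closedBall_inter hθ₁ hmeet).trans
      (by gcongr; exact (hF p hp).2)⟩
  have hstep : ∀ q ∈ S, ∃ q' ∈ S, q'.2 ≤ θ * q.2 := by
    rintro q ⟨hq, hreach⟩
    have hnear := (infDist_le_chainReach hθ₀ hθ₁ (hδ.le.trans (hF q hq).1)).trans hreach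
    obtain ⟨q', hq', hle, hinter⟩ := hdesc q hq hnear
    exact ⟨q', ⟨hq', (chainReach_le_chainReach hθ₀ hθ₁ hle hinter).trans hreach⟩, hle⟩
  obtain ⟨q, hqS, hqδ⟩ := exists_mem_lt_of_forall_exists_le_mul ⟨p, hpS⟩ hθ₀ hθ₁ hstep hδ
  exact hqδ.not_ge (hF q hqS.1).1

/-- Descent argument: in a finite family of balls of radii in `(0,1]`, if every ball whose
center is within distance `4` of the cube `Λ = [-1/2,1/2]^d` is overlapped by a ball of the
family of at most half its radius, then no ball of the family intersects `Λ`. -/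
theorem stmt5 (d : ℕ) (hd : 1 ≤ d)
    (Λ : Set (EuclideanSpace ℝ (Fin d)))
    (hΛ : Λ = {y | ∀ i, y i ∈ Set.Icc (-(1 / 2) : ℝ) (1 / 2)})
    (F : Finset (EuclideanSpace ℝ (Fin d) × ℝ))
    (hF : ∀ p ∈ F, 0 < p.2 ∧ p.2 ≤ 1)
    (hdesc : ∀ p ∈ F, infDist p.1 Λ ≤ 4 →
      ∃ p' ∈ F, p'.2 ≤ p.2 / 2 ∧
        (closedBall p'.1 p'.2 ∩ closedBall p.1 p.2).Nonempty) :
    ∀ p ∈ F, closedBall p.1 p.2 ∩ Λ = ∅ := by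
  obtain ⟨δ, hδ, hle⟩ := exists_pos_forall_le F fun p hp => (hF p hp).1
  exact stmt5_general (θ := 1 / 2) (ρ := 1) (by norm_num) (by norm_num) hδ Λ F
    (fun p hp => ⟨hle p hp, (hF p hp).2⟩) fun p hp hnear => by
      simpa only [one_div_mul_eq_div, Finset.mem_coe] using
        hdesc p hp (hnear.trans_eq (by norm_num))
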